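/- For every z > 0 and every n ≥ 4, the monic orthogonal polynomials for the weight e^{−x⁴} on [−z, z] satisfy the first structure relation (x² − z²)·P′_{n+1}(x) = (n+1)·P_{n+2}(x) + B_n·P_n(x) + C_n·P_{n−2}(x) + D_n·P_{n−4}(x) (as an identity of polynomials), where B_n = 4γ_{n+1}·[ γ_{n+2}(γ_{n+3} + γ_{n+2} + γ_{n+1} + γ_n − z²) + γ_{n+1}(γ_{n+2} + γ_{n+1} + γ_n − z²) + γ_n(γ_{n+1} + γ_n + γ_{n−1} − z²) − 1/2 − n/4 ], C_n = 4γ_{n+1}γ_nγ_{n−1}·(γ_{n+2} + γ_{n+1} + γ_n + γ_{n−1} + γ_{n−2} − z²), and D_n = 4γ_{n+1}γ_nγ_{n−1}γ_{n−2}γ_{n−3}. -/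

import Mathlib

open Polynomial

/-- The integration functional. -/
noncomputable def freudL (z : ℝ) (p : ℝ[X]) : ℝ :=
  ∫ x in (-z)..z, p.eval x * Real.exp (-x ^ 4)

lemma freud_int (z : ℝ) (p : ℝ[X]) :
    IntervalIntegrable (fun x => p.eval x * Real.exp (-x ^ 4)) MeasureTheory.volume (-z) z := by
  apply Continuous.intervalIntegrable
  have := p.continuous
  fun_prop

lemma freudL_add (z : ℝ) (p q : ℝ[X]) : freudL z (p + q) = freudL z p + freudL z q := by
  unfold freudL
  rw [← intervalIntegral.integral_add (freud_int z p) (freud_int z q)]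
  congr 1; ext x; simp [add_mul]

lemma freudL_C (z a : ℝ) (p : ℝ[X]) : freudL z (C a * p) = a * freudL z p := by
  unfold freudL
  rw [← intervalIntegral.integral_const_mul]
  congr 1; ext x; simp [mul_assoc]

lemma freudL_C2 (z a : ℝ) (p q : ℝ[X]) :
    freudL z (p * (C a * q)) = a * freudL z (p * q) := by
  rw [← freudL_C, mul_left_comm]

lemma freudL_sub (z : ℝ) (p q : ℝ[X]) : freudL z (p - q) = freudL z p - freudL z q := by
  have h1 := freudL_add z (p - q) q
  rw [sub_add_cancel] at h1
  linarith

lemma freudL_parts (z : ℝ) (r : ℝ[X]) (h1 : r.eval z = 0) (h2 : r.eval (-z) = 0) :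
    freudL z (derivative r) = 4 * freudL z (X ^ 3 * r) := by
  have h3 : freudL z (derivative r - C 4 * (X ^ 3 * r)) = 0 := by
    unfold freudL
    rw [intervalIntegral.integral_eq_sub_of_hasDerivAt
      (f := fun x => r.eval x * Real.exp (-x ^ 4)) _ (freud_int z _)]
    · simp [h1, h2]
    · intro x _
      have e1 : HasDerivAt (fun x : ℝ => -x ^ 4) (-(4 * x ^ 3)) x := by
        exact (hasDerivAt_pow 4 x).fun_neg.congr_deriv (by norm_num)
      refine ((r.hasDerivAt x).mul e1.exp).congr_deriv ?_
      simp
      ring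
  rw [freudL_sub, freudL_C] at h3
  linarith

lemma freudL_odd (z : ℝ) (p : ℝ[X]) (hp : ∀ x, p.eval (-x) = -p.eval x) : freudL z p = 0 := by
  have h := intervalIntegral.integral_comp_neg (a := -z) (b := z)
    (fun x => p.eval x * Real.exp (-x ^ 4))
  have h4 : ∀ x : ℝ, (-x) ^ 4 = x ^ 4 := fun x => by ring
  simp only [hp, neg_neg, neg_mul, intervalIntegral.integral_neg, h4] at h
  unfold freudL
  linarith

lemma freud_parity (P : ℕ → ℝ[X]) (γ : ℕ → ℝ) (hP0 : P 0 = 1) (hP1 : P 1 = X)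
    (hrec : ∀ n, X * P (n + 1) = P (n + 2) + C (γ (n + 1)) * P n) (n : ℕ) :
    ∀ x, (P n).eval (-x) = (-1) ^ n * (P n).eval x := by
  induction n using Nat.strong_induction_on with
  | _ n ih =>
    match n, ih with
    | 0, _ => simp [hP0]
    | 1, _ => simp [hP1]
    | k + 2, ih =>
      intro x
      have e1 := congrArg (eval x) (hrec k)
      have e2 := congrArg (eval (-x)) (hrec k)
      simp only [eval_mul, eval_add, eval_X, eval_C] at e1 e2
      rw [ih k (by omega), ih (k + 1) (by omega)] at e2
      linear_combination -e2 + (-1) ^ k * e1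

/-- Pairing with `P m` a polynomial of degree at most `m`. -/
lemma freud_low (z : ℝ) (P : ℕ → ℝ[X]) (h : ℕ → ℝ)
    (hmonic : ∀ n, (P n).Monic) (hdeg : ∀ n, (P n).natDegree = n)
    (hL : ∀ m n, freudL z (P m * P n) = if m = n then h n else 0) (m : ℕ) :
    ∀ d, ∀ q : ℝ[X], q.natDegree < d → d ≤ m + 1 → freudL z (q * P m) = q.coeff m * h m := by
  intro d
  induction d with
  | zero => intro q hq; omega
  | succ d ih =>
    intro q hq hd
    have hPc : (P d).coeff d = 1 := by
      have := (hmonic d).coeff_natDegree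
      rwa [hdeg] at this
    have key : freudL z ((q - C (q.coeff d) * P d) * P m)
        = (q - C (q.coeff d) * P d).coeff m * h m := by
      set r := q - C (q.coeff d) * P d with hr
      have hrd : r.natDegree ≤ d := by
        refine (natDegree_sub_le _ _).trans (max_le (by omega) ?_)
        exact (natDegree_C_mul_le _ _).trans (hdeg d).le
      have hrc : r.coeff d = 0 := by simp [hr, hPc]
      by_cases h0 : d = 0
      · have : r = 0 := by
          subst h0
          rw [eq_C_of_natDegree_le_zero hrd, hrc, C_0]
        rw [this]
        have := freudL_C z 0 0
        simpa using this
      · refine ih r ?_ (by omega)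
        rcases hrd.lt_or_eq with h1 | h1
        · exact h1
        · exfalso
          have : r = 0 := by
            rw [← leadingCoeff_eq_zero, leadingCoeff, h1, hrc]
          rw [this] at h1
          simp at h1
          omega
    rw [sub_mul, freudL_sub, mul_assoc, freudL_C, hL, coeff_sub, coeff_C_mul] at key
    split_ifs at key with hdm
    · subst hdm
      rw [hPc] at key
      linarith
    · have : (P d).coeff m = 0 := by
        apply coeff_eq_zero_of_natDegree_lt
        rw [hdeg]; omega
      rw [this] at key
      linarith

lemma freud_zero (z : ℝ) (P : ℕ → ℝ[X]) (h : ℕ → ℝ)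
    (hmonic : ∀ n, (P n).Monic) (hdeg : ∀ n, (P n).natDegree = n)
    (hL : ∀ m n, freudL z (P m * P n) = if m = n then h n else 0)
    (hhpos : ∀ n, 0 < h n) (q : ℝ[X]) (hq : ∀ k, freudL z (q * P k) = 0) : q = 0 := by
  have h1 := freud_low z P h hmonic hdeg hL q.natDegree (q.natDegree + 1) q (by omega) le_rfl
  rw [hq] at h1
  have h2 := (hhpos q.natDegree).ne'
  rw [← leadingCoeff_eq_zero, leadingCoeff]
  simpa [h2] using h1.symm

/-- First structure relation for the monic orthogonal polynomials for the weight
`e^{-x⁴}` on `[-z, z]`: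
`(x²-z²)·P'_{n+1} = (n+1)·P_{n+2} + B_n·P_n + C_n·P_{n-2} + D_n·P_{n-4}`. -/
theorem truncated_freud_structure_relation (z : ℝ) (hz : 0 < z)
    (P : ℕ → Polynomial ℝ) (γ h : ℕ → ℝ)
    (hmonic : ∀ n, (P n).Monic)
    (hdeg : ∀ n, (P n).natDegree = n)
    (horth : ∀ m n, m ≠ n →
      ∫ x in (-z)..z, (P m).eval x * (P n).eval x * Real.exp (-x ^ 4) = 0)
    (hh : ∀ n, h n = ∫ x in (-z)..z, ((P n).eval x) ^ 2 * Real.exp (-x ^ 4))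
    (hhpos : ∀ n, 0 < h n)
    (hP0 : P 0 = 1) (hP1 : P 1 = Polynomial.X)
    (hrec : ∀ n, Polynomial.X * P (n + 1) = P (n + 2) + Polynomial.C (γ (n + 1)) * P n)
    (hγ0 : γ 0 = 0)
    (hγ : ∀ n, γ (n + 1) = h (n + 1) / h n)
    (n : ℕ) (hn : 4 ≤ n) :
    (X ^ 2 - C (z ^ 2)) * derivative (P (n + 1)) =
      C ((n : ℝ) + 1) * P (n + 2)
      + C (4 * γ (n + 1) *
          (γ (n + 2) * (γ (n + 3) + γ (n + 2) + γ (n + 1) + γ n - z ^ 2)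
            + γ (n + 1) * (γ (n + 2) + γ (n + 1) + γ n - z ^ 2)
            + γ n * (γ (n + 1) + γ n + γ (n - 1) - z ^ 2)
            - 1 / 2 - (n : ℝ) / 4)) * P n
      + C (4 * γ (n + 1) * γ n * γ (n - 1) *
          (γ (n + 2) + γ (n + 1) + γ n + γ (n - 1) + γ (n - 2) - z ^ 2)) * P (n - 2)
      + C (4 * γ (n + 1) * γ n * γ (n - 1) * γ (n - 2) * γ (n - 3)) * P (n - 4) := by
  have hL : ∀ m n, freudL z (P m * P n) = if m = n then h n else 0 := by
    intro m n
    unfold freudL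
    split_ifs with hmn
    · subst hmn
      rw [hh]
      congr 1; ext x; rw [eval_mul, sq]
    · rw [← horth m n hmn]
      congr 1; ext x; rw [eval_mul]
  have hlow : ∀ (m : ℕ) (q : ℝ[X]), q.natDegree ≤ m →
      freudL z (q * P m) = q.coeff m * h m := fun m q hq =>
    freud_low z P h hmonic hdeg hL m (m + 1) q (by omega) le_rfl
  have hlow0 : ∀ (m : ℕ) (q : ℝ[X]), q.natDegree < m → freudL z (q * P m) = 0 := by
    intro m q hq
    rw [hlow m q hq.le, coeff_eq_zero_of_natDegree_lt hq, zero_mul]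
  have hpar := freud_parity P γ hP0 hP1 hrec
  have hs : ∀ j, h (j + 1) = γ (j + 1) * h j := by
    intro j
    rw [hγ, div_mul_cancel₀ _ (hhpos j).ne']
  obtain ⟨m, rfl⟩ : ∃ m, n = m + 4 := ⟨n - 4, by omega⟩
  have i1 : m + 4 - 1 = m + 3 := by omega
  have i2 : m + 4 - 2 = m + 2 := by omega
  have i3 : m + 4 - 3 = m + 1 := by omega
  have i4 : m + 4 - 4 = m := by omega
  rw [i1, i2, i3, i4]
  simp only [add_assoc, Nat.reduceAdd] at *
  rw [← sub_eq_zero]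
  apply freud_zero z P h hmonic hdeg hL hhpos
  intro k
  rw [sub_mul, freudL_sub]
  simp only [add_mul, mul_assoc, freudL_add, freudL_C, hL]
  set W : ℝ[X] := X ^ 2 - C (z ^ 2) with hW
  have hWm : W.Monic := by
    rw [hW]; exact monic_X_pow_sub_C _ (by norm_num)
  have hWd : W.natDegree = 2 := by
    rw [hW]; exact natDegree_X_pow_sub_C
  have hWP : ∀ j, (W * P j).natDegree = j + 2 := by
    intro j
    rw [hWm.natDegree_mul (hmonic j), hWd, hdeg]; omega
  have hWPc : ∀ j, (W * P j).coeff (j + 2) = 1 := by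
    intro j
    have := (hWm.mul (hmonic j)).coeff_natDegree
    rwa [hWP] at this
  -- integration by parts
  have hbp : freudL z (W * (derivative (P (m + 5)) * P k))
      = 4 * freudL z (X ^ 3 * (W * P k) * P (m + 5))
        - freudL z (derivative (W * P k) * P (m + 5)) := by
    have e := freudL_parts z (W * P k * P (m + 5)) (by simp [hW]) (by simp [hW])
    rw [derivative_mul, freudL_add] at e
    rw [show W * (derivative (P (m + 5)) * P k) = W * P k * derivative (P (m + 5)) by ring,
      mul_assoc (X ^ 3)]
    linarith
  have hbig : ∀ j, m + 6 < j → freudL z (W * (derivative (P (m + 5)) * P j)) = 0 := by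
    intro j hj
    rw [← mul_assoc]
    apply hlow0
    refine lt_of_le_of_lt natDegree_mul_le ?_
    have := natDegree_derivative_le (P (m + 5))
    rw [hdeg] at this
    omega
  -- expansions
  have r1 := hrec m
  have r2 := hrec (m + 1)
  have r3 := hrec (m + 2)
  have r4 := hrec (m + 3)
  have r5 := hrec (m + 4)
  have r6 := hrec (m + 5)
  have r7 := hrec (m + 6)
  simp only [add_assoc, Nat.reduceAdd] at r1 r2 r3 r4 r5 r6 r7
  have x1 : X * P (m + 5) = P (m + 6) + C (γ (m + 5)) * P (m + 4) := r5
  have x3 : X ^ 3 * P (m + 5) = P (m + 8) + C (γ (m + 7) + γ (m + 6) + γ (m + 5)) * P (m + 6)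
      + C (γ (m + 5) * (γ (m + 6) + γ (m + 5) + γ (m + 4))) * P (m + 4)
      + C (γ (m + 5) * γ (m + 4) * γ (m + 3)) * P (m + 2) := by
    simp only [C_add, C_mul]
    linear_combination X ^ 2 * r5 + X * r6 + r7 + C (γ (m + 6)) * r5
      + C (γ (m + 5)) * X * r4 + C (γ (m + 5)) * r5 + C (γ (m + 5)) * C (γ (m + 4)) * r3
  have x2 : X ^ 2 * P (m + 4) = P (m + 6) + C (γ (m + 5) + γ (m + 4)) * P (m + 4)
      + C (γ (m + 4) * γ (m + 3)) * P (m + 2) := by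
    simp only [C_add, C_mul]
    linear_combination X * r4 + r5 + C (γ (m + 4)) * r3
  have x2' : X ^ 2 * P (m + 2) = P (m + 4) + C (γ (m + 3) + γ (m + 2)) * P (m + 2)
      + C (γ (m + 2) * γ (m + 1)) * P m := by
    simp only [C_add, C_mul]
    linear_combination X * r2 + r3 + C (γ (m + 2)) * r1
  have hsplit : ∀ p q : ℝ[X], freudL z (X ^ 3 * (W * p) * q)
      = freudL z ((X ^ 2 * p) * (X ^ 3 * q)) - z ^ 2 * freudL z ((X ^ 2 * p) * (X * q)) := by
    intro p q
    rw [← freudL_C, ← freudL_sub]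
    congr 1
    rw [hW]; ring
  have s0 := hs m
  have s1 := hs (m + 1)
  have s2 := hs (m + 2)
  have s3 := hs (m + 3)
  have s4 := hs (m + 4)
  have s5 := hs (m + 5)
  simp only [add_assoc, Nat.reduceAdd] at s1 s2 s3 s4 s5
  have hder : ∀ j, j + 1 < m + 5 → freudL z (derivative (W * P j) * P (m + 5)) = 0 := by
    intro j hj
    apply hlow0
    have := natDegree_derivative_le (W * P j)
    rw [hWP] at this
    omega
  by_cases hodd : Odd (m + k)
  · -- parity
    have hz0 : freudL z (W * (derivative (P (m + 5)) * P k)) = 0 := by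
      apply freudL_odd
      intro x
      have hd : (derivative (P (m + 5))).eval (-x)
          = (-1) ^ (m + 4) * (derivative (P (m + 5))).eval x := by
        have hc : (P (m + 5)).comp (-X) = C ((-1) ^ (m + 5)) * P (m + 5) := by
          apply Polynomial.funext
          intro y
          rw [eval_comp, eval_mul, eval_C, eval_neg, eval_X, hpar]
        have hc' := congrArg (fun p => eval x (derivative p)) hc
        simp only [derivative_comp, derivative_C_mul, derivative_neg, derivative_X, eval_mul,
          eval_C, eval_comp, eval_neg, eval_X, eval_one] at hc'
        rw [pow_succ] at hc'
        linarith
      have hp : (-1 : ℝ) ^ (m + 4) * (-1) ^ k = -1 := by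
        rw [← pow_add]
        apply Odd.neg_one_pow
        rw [show m + 4 + k = (m + k) + 4 by ring]
        exact hodd.add_even (by decide)
      have hWx : W.eval (-x) = W.eval x := by simp [hW]
      rw [eval_mul, eval_mul, eval_mul, eval_mul, hd, hpar, hWx]
      linear_combination (W.eval x * (derivative (P (m + 5))).eval x * (P k).eval x) * hp
    rw [hz0]
    have hne : ∀ j, m + 2 * j ≠ k := by
      rintro j rfl
      rw [show m + (m + 2 * j) = 2 * (m + j) by ring] at hodd
      exact (Nat.not_odd_iff_even.2 (even_two_mul _)) hodd
    rw [if_neg (hne 3), if_neg (hne 2), if_neg (hne 1), if_neg (show m ≠ k from hne 0)]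
    simp
  · by_cases c0 : m + 6 < k
    · rw [hbig k c0, if_neg (by omega), if_neg (by omega), if_neg (by omega), if_neg (by omega)]
      simp
    by_cases c1 : k < m
    · rw [hbp, hder k (by omega), hlow0, if_neg (by omega), if_neg (by omega), if_neg (by omega),
        if_neg (by omega)]
      · simp
      · refine lt_of_le_of_lt natDegree_mul_le ?_
        rw [hWP, natDegree_X_pow]; omega
    obtain ⟨j, rfl⟩ : ∃ j, k = m + j := ⟨k - m, by omega⟩
    have hj : j ≤ 6 := by omega
    have hje : ¬ Odd j := by
      intro hj'
      apply hodd
      rw [← add_assoc, ← two_mul]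
      exact (even_two_mul m).add_odd hj'
    clear hbig hodd c0 c1
    interval_cases j
    · -- k = n - 4
      rw [hbp, hder _ (by omega), hlow]
      · have : (X ^ 3 * (W * P (m + 0))).coeff (m + 5) = 1 := by
          rw [show m + 5 = (m + 0 + 2) + 3 by ring, coeff_X_pow_mul, hWPc]
        rw [this]
        simp
        rw [s4, s3, s2, s1, s0]
        ring
      · refine natDegree_mul_le.trans ?_
        rw [hWP, natDegree_X_pow]; omega
    · exact absurd (by decide) hje
    · rw [hbp, hder _ (by omega), hsplit, x2', x3, x1]
      simp only [add_mul, mul_add, mul_assoc, freudL_add, freudL_C, freudL_C2, hL]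
      simp
      rw [s3, s2]
      ring
    · exact absurd (by decide) hje
    · have hd2 : freudL z (derivative (W * P (m + 4)) * P (m + 5)) = (m + 6) * h (m + 5) := by
        rw [hlow]
        · have := hWPc (m + 4)
          rw [coeff_derivative]
          simp only [add_assoc, Nat.reduceAdd] at this ⊢
          rw [this]
          push_cast
          ring
        · have := natDegree_derivative_le (W * P (m + 4))
          rw [hWP] at this
          omega
      rw [hbp, hd2, hsplit, x2, x3, x1]
      simp only [add_mul, mul_add, mul_assoc, freudL_add, freudL_C, freudL_C2, hL]
      simp
      rw [s5, s4, s3, s2]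
      ring
    · exact absurd (by decide) hje
    · rw [← mul_assoc, hlow]
      · have hc : (W * derivative (P (m + 5))).coeff (m + 6) = m + 5 := by
          have hP5 : (P (m + 5)).coeff (m + 5) = 1 := by
            have := (hmonic (m + 5)).coeff_natDegree
            rwa [hdeg] at this
          have h0 : (derivative (P (m + 5))).coeff (m + 6) = 0 := by
            apply coeff_eq_zero_of_natDegree_lt
            have := natDegree_derivative_le (P (m + 5))
            rw [hdeg] at this
            omega
          rw [hW, sub_mul, coeff_sub, coeff_C_mul, h0,
            show m + 6 = (m + 4) + 2 by ring, coeff_X_pow_mul, coeff_derivative]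
          simp only [add_assoc, Nat.reduceAdd]
          rw [hP5]
          push_cast
          ring
        rw [hc]
        simp
        ring
      · refine natDegree_mul_le.trans ?_
        have := natDegree_derivative_le (P (m + 5))
        rw [hdeg] at this
        omega
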